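/- Let M be a locally connected topological space and ≪ a transitive binary relation on M whose graph is open in M × M and which is future-dense and past-dense. Let (P_k)_{k∈ℕ} be a decreasing sequence of past sets, i.e. I⁻(P_k) = P_k and P_{k+1} ⊆ P_k for all k, and set F_k := M \ closure(P_k). Then the sequence of topological boundaries (∂P_k) has a Hausdorff closed limit, and this limit equals ∂(⋃_k F_k). -/

import Mathlib

/-- The Hausdorff upper limit of a sequence of subsets. -/
def hausdorffUpperLimit {M : Type*} [TopologicalSpace M] (S : ℕ → Set M) : Set M :=
  {p | ∀ U ∈ nhds p, {k : ℕ | (U ∩ S k).Nonempty}.Infinite}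

/-- The Hausdorff lower limit of a sequence of subsets. -/
def hausdorffLowerLimit {M : Type*} [TopologicalSpace M] (S : ℕ → Set M) : Set M :=
  {p | ∀ U ∈ nhds p, {k : ℕ | ¬ (U ∩ S k).Nonempty}.Finite}

/-- The timelike past of a set `S`: all points related to some point of `S`. -/
def Iminus {M : Type*} (r : M → M → Prop) (S : Set M) : Set M :=
  {x | ∃ s ∈ S, r x s}

/-!
Write `C = ⋂ k, closure (P k)`, the complement of `⋃ k, F k`, so that both have the same frontier.
Monotonicity puts the upper limit of the frontiers inside `C`. It misses `interior C`: a point `p`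
there has some `q ∈ C` in its future, and the past of `q` is then an open neighbourhood of `p` lying
in the interior of every `P k`. Conversely, a connected open neighbourhood of a point of
`frontier C` meets every `P k` and is eventually not contained in `P k`, so it meets
`frontier (P k)`.
-/

open Set Filter Topology

section HausdorffLimits

variable {M : Type*} [TopologicalSpace M] {S : ℕ → Set M} {p : M}

theorem mem_hausdorffUpperLimit_iff_frequently :
    p ∈ hausdorffUpperLimit S ↔ ∀ U ∈ 𝓝 p, ∃ᶠ k in atTop, (U ∩ S k).Nonempty :=
  forall₂_congr fun _ _ => Nat.frequently_atTop_iff_infinite.symm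

theorem mem_hausdorffLowerLimit_iff_eventually :
    p ∈ hausdorffLowerLimit S ↔ ∀ U ∈ 𝓝 p, ∀ᶠ k in atTop, (U ∩ S k).Nonempty := by
  rw [← Nat.cofinite_eq_atTop]
  exact forall₂_congr fun _ _ => eventually_cofinite.symm

theorem hausdorffLowerLimit_subset_hausdorffUpperLimit :
    hausdorffLowerLimit S ⊆ hausdorffUpperLimit S := fun _ hp =>
  mem_hausdorffUpperLimit_iff_frequently.2 fun U hU =>
    (mem_hausdorffLowerLimit_iff_eventually.1 hp U hU).frequently

theorem hausdorffLimits_eq_of_subset_of_subset {L : Set M} (hupper : hausdorffUpperLimit S ⊆ L)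
    (hlower : L ⊆ hausdorffLowerLimit S) :
    hausdorffUpperLimit S = L ∧ hausdorffLowerLimit S = L :=
  have hsub := hausdorffLowerLimit_subset_hausdorffUpperLimit (S := S)
  ⟨hupper.antisymm (hlower.trans hsub), (hsub.trans hupper).antisymm hlower⟩

theorem hausdorffUpperLimit_subset_closure_of_eventually_subset {T : Set M}
    (h : ∀ᶠ k in atTop, S k ⊆ T) : hausdorffUpperLimit S ⊆ closure T := by
  refine fun p hp => mem_closure_iff_nhds.2 fun U hU => ?_
  have hmeets := mem_hausdorffUpperLimit_iff_frequently.1 hp U hU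
  obtain ⟨k, hUS, hST⟩ := (hmeets.and_eventually h).exists
  exact hUS.mono (inter_subset_inter_right U hST)

end HausdorffLimits

theorem nonempty_inter_frontier_of_isPreconnected {M : Type*} [TopologicalSpace M] {V s : Set M}
    (hV : IsPreconnected V) (hmeets : (V ∩ s).Nonempty) (hsub : ¬V ⊆ s) :
    (V ∩ frontier s).Nonempty := by
  contrapose! hsub with hfrontier
  have hcover : V ⊆ interior s ∪ (closure s)ᶜ := fun x hx =>
    or_iff_not_imp_left.2 fun hint hcl =>
      eq_empty_iff_forall_notMem.1 hfrontier x ⟨hx, hcl, hint⟩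
  have hinterior : (V ∩ interior s).Nonempty := by
    obtain ⟨x, hxV, hxs⟩ := hmeets
    exact ⟨x, hxV, (hcover hxV).resolve_right (not_not_intro (subset_closure hxs))⟩
  have hdisjoint : Disjoint (interior s) (closure s)ᶜ :=
    disjoint_compl_right.mono_left interior_subset_closure
  exact (hV.subset_left_of_subset_union isOpen_interior isClosed_closure.isOpen_compl hdisjoint
    hcover hinterior).trans interior_subset

section AntitoneFrontiers

variable {M : Type*} [TopologicalSpace M] {P : ℕ → Set M}

theorem hausdorffUpperLimit_frontier_subset_iInter_closure (hP : Antitone P) :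
    hausdorffUpperLimit (fun k => frontier (P k)) ⊆ ⋂ k, closure (P k) := by
  refine subset_iInter fun n => ?_
  have hsub : ∀ᶠ k in atTop, frontier (P k) ⊆ closure (P n) :=
    (eventually_ge_atTop n).mono fun k hnk =>
      frontier_subset_closure.trans (closure_mono (hP hnk))
  exact closure_closure (s := P n) ▸ hausdorffUpperLimit_subset_closure_of_eventually_subset hsub

theorem frontier_iInter_closure_subset_hausdorffLowerLimit [LocallyConnectedSpace M]
    (hP : Antitone P) :
    frontier (⋂ k, closure (P k)) ⊆ hausdorffLowerLimit (fun k => frontier (P k)) := by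
  intro p hp
  refine mem_hausdorffLowerLimit_iff_eventually.2 fun U hU => ?_
  obtain ⟨V, hVU, hVopen, hpV, hVconn⟩ :=
    locallyConnectedSpace_iff_subsets_isOpen_isConnected.1 ‹_› p U hU
  rw [frontier_eq_closure_inter_closure, (isClosed_iInter fun _ => isClosed_closure).closure_eq]
    at hp
  have hmeets (k : ℕ) : (V ∩ P k).Nonempty :=
    mem_closure_iff.1 (mem_iInter.1 hp.1 k) V hVopen hpV
  obtain ⟨y, hyV, hy⟩ := mem_closure_iff.1 hp.2 V hVopen hpV
  obtain ⟨n, hyn⟩ : ∃ n, y ∉ closure (P n) := by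
    simpa only [mem_compl_iff, mem_iInter, not_forall] using hy
  filter_upwards [eventually_ge_atTop n] with k hnk
  have hsub : ¬V ⊆ P k := fun h => hyn (subset_closure (hP hnk (h hyV)))
  exact (nonempty_inter_frontier_of_isPreconnected hVconn.isPreconnected (hmeets k) hsub).mono
    (inter_subset_inter_left _ hVU)

end AntitoneFrontiers

section Pasts

variable {M : Type*} [TopologicalSpace M] {r : M → M → Prop}

theorem isOpen_Iminus (hpast : ∀ y, IsOpen {x | r x y}) (S : Set M) : IsOpen (Iminus r S) := by
  have hunion : Iminus r S = ⋃ s ∈ S, {x | r x s} := by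
    ext x
    simp only [Iminus, mem_ofPred_eq, mem_iUnion, exists_prop]
  exact hunion ▸ isOpen_biUnion fun s _ => hpast s

theorem Iminus_closure_subset_Iminus (hfuture : ∀ x, IsOpen {y | r x y}) (S : Set M) :
    Iminus r (closure S) ⊆ Iminus r S := by
  rintro x ⟨y, hy, hxy⟩
  obtain ⟨s, hxs, hs⟩ := mem_closure_iff.1 hy _ (hfuture x) hxy
  exact ⟨s, hs, hxs⟩

theorem Iminus_closure_subset_interior (hfuture : ∀ x, IsOpen {y | r x y})
    (hpast : ∀ y, IsOpen {x | r x y}) {S : Set M} (hS : Iminus r S ⊆ S) :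
    Iminus r (closure S) ⊆ interior S :=
  (Iminus_closure_subset_Iminus hfuture S).trans (interior_maximal hS (isOpen_Iminus hpast S))

theorem disjoint_hausdorffUpperLimit_frontier_interior_iInter_closure
    (hfuture : ∀ x, IsOpen {y | r x y}) (hpast : ∀ y, IsOpen {x | r x y})
    (hdense : ∀ x, x ∈ closure {y | r x y}) {P : ℕ → Set M} (hP : ∀ k, Iminus r (P k) ⊆ P k) :
    Disjoint (hausdorffUpperLimit fun k => frontier (P k)) (interior (⋂ k, closure (P k))) := by
  refine disjoint_left.2 fun p hp hpC => ?_
  obtain ⟨q, hqC, hpq⟩ := mem_closure_iff.1 (hdense p) _ isOpen_interior hpC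
  have hinterior (k : ℕ) : {x | r x q} ⊆ interior (P k) := fun x hxq =>
    Iminus_closure_subset_interior hfuture hpast (hP k)
      ⟨q, mem_iInter.1 (interior_subset hqC) k, hxq⟩
  obtain ⟨k, x, hxq, hx⟩ :=
    (mem_hausdorffUpperLimit_iff_frequently.1 hp _ ((hpast q).mem_nhds hpq)).exists
  exact hx.2 (hinterior k hxq)

theorem hausdorffUpperLimit_frontier_subset_frontier_iInter_closure
    (hfuture : ∀ x, IsOpen {y | r x y}) (hpast : ∀ y, IsOpen {x | r x y})
    (hdense : ∀ x, x ∈ closure {y | r x y}) {P : ℕ → Set M} (hP : ∀ k, Iminus r (P k) ⊆ P k)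
    (hanti : Antitone P) :
    hausdorffUpperLimit (fun k => frontier (P k)) ⊆ frontier (⋂ k, closure (P k)) := by
  rw [(isClosed_iInter fun _ => isClosed_closure).frontier_eq]
  exact subset_sdiff.2 ⟨hausdorffUpperLimit_frontier_subset_iInter_closure hanti,
    disjoint_hausdorffUpperLimit_frontier_interior_iInter_closure hfuture hpast hdense hP⟩

end Pasts

theorem hausdorffLimit_frontiers_of_decreasing_pasts_general {M : Type*} [TopologicalSpace M]
    [LocallyConnectedSpace M] (r : M → M → Prop)
    (hfuture : ∀ x, IsOpen {y | r x y}) (hpast : ∀ y, IsOpen {x | r x y})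
    (hdense : ∀ x, x ∈ closure {y | r x y})
    (P : ℕ → Set M) (hP : ∀ k, Iminus r (P k) ⊆ P k) (hanti : Antitone P)
    (F : ℕ → Set M) (hF : ∀ k, F k = (closure (P k))ᶜ) :
    hausdorffUpperLimit (fun k => frontier (P k)) = frontier (⋃ k, F k) ∧
    hausdorffLowerLimit (fun k => frontier (P k)) = frontier (⋃ k, F k) := by
  have hfrontier : frontier (⋃ k, F k) = frontier (⋂ k, closure (P k)) := by
    simp only [hF, ← compl_iInter, frontier_compl]
  rw [hfrontier]
  exact hausdorffLimits_eq_of_subset_of_subset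
    (hausdorffUpperLimit_frontier_subset_frontier_iInter_closure hfuture hpast hdense hP hanti)
    (frontier_iInter_closure_subset_hausdorffLowerLimit hanti)

theorem hausdorffLimit_frontiers_of_decreasing_pasts {M : Type*} [TopologicalSpace M]
    [LocallyConnectedSpace M]
    (r : M → M → Prop)
    (htrans : Transitive r)
    (hopen : IsOpen {p : M × M | r p.1 p.2})
    (hfd : ∀ x : M, x ∈ closure {y | r x y})
    (hpd : ∀ x : M, x ∈ closure {y | r y x})
    (P : ℕ → Set M) (hP : ∀ k, Iminus r (P k) = P k)
    (hmono : ∀ k, P (k + 1) ⊆ P k)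
    (F : ℕ → Set M) (hF : ∀ k, F k = (closure (P k))ᶜ) :
    hausdorffUpperLimit (fun k => frontier (P k)) = frontier (⋃ k, F k) ∧
    hausdorffLowerLimit (fun k => frontier (P k)) = frontier (⋃ k, F k) :=
  hausdorffLimit_frontiers_of_decreasing_pasts_general r (fun x => hopen.preimage (.prodMk_right x))
    (fun y => hopen.preimage (.prodMk_left y)) hfd P (fun k => (hP k).subset)
    (antitone_nat_of_succ_le hmono) F hF
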